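/- arXiv:1301.4206 — 4 statements merged into one kernel-verified Lean document; each statement's English description precedes it below -/
import Mathlib

section
/- (Edge version of Menger's Theorem.) Let G be a finite undirected multigraph and let v and w be two distinct vertices of G. Then there exist k pairwise edge-disjoint ttrails between v and w if and only if no deletion of k−1 edges from G disconnects v and w. -/
open Finset

/-- A finite undirected multigraph: each edge `e : E` has an unordered pair of
endpoints `ends e : Sym2 V`.  Loops and parallel edges are allowed and the graph
need not be connected. -/
structure Multigraph (V E : Type*) where
  ends : E → Sym2 V

namespace Multigraph

variable {V E : Type*}

/-- `G.IsChain x y p` : `p` is an alternating sequence `v₁,e₁,…,vₙ,eₙ` (encoded as a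
list of vertex-edge pairs) which forms a walk from `x` to `y` (the final vertex `y`
is omitted, i.e. this is "truncated"). -/
def IsChain (G : Multigraph V E) : V → V → List (V × E) → Prop
  | x, y, [] => x = y
  | x, y, (v, e) :: rest => v = x ∧ ∃ w, G.ends e = s(x, w) ∧ G.IsChain w y rest

/-- A truncated trail (ttrail) from `x` to `y`: an alternating walk with no repeated
edges, final vertex omitted. -/
def IsTtrail (G : Multigraph V E) (x y : V) (p : List (V × E)) : Prop :=
  G.IsChain x y p ∧ (p.map Prod.snd).Nodup

/-- A cycle: a closed ttrail with no repeated vertices. -/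
def IsCycle (G : Multigraph V E) (x : V) (p : List (V × E)) : Prop :=
  G.IsTtrail x x p ∧ (p.map Prod.fst).Nodup

/-- Two ttrails are edge-disjoint if they have no common edges. -/
def EdgeDisjoint (p q : List (V × E)) : Prop :=
  ∀ e, e ∈ p.map Prod.snd → e ∉ q.map Prod.snd

/-- `k`-edge-connectivity: two distinct vertices are `k`-edge-connected if there are
`k` pairwise edge-disjoint ttrails between them; every vertex is `k`-edge-connected
to itself. -/
def KConn (G : Multigraph V E) (k : ℕ) (v w : V) : Prop :=
  v = w ∨ ∃ p : Fin k → List (V × E),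
    (∀ i, G.IsTtrail v w (p i)) ∧ ∀ i j, i ≠ j → EdgeDisjoint (p i) (p j)

/-- `conk G k` : the number of equivalence classes of `k`-edge-connected vertices. -/
noncomputable def conk (G : Multigraph V E) (k : ℕ) : ℕ :=
  Nat.card (Quotient (Relation.EqvGen.setoid (G.KConn k)))

/-- The number of connected components of `G`. -/
noncomputable def con (G : Multigraph V E) : ℕ := G.conk 1

section Homology

variable [Fintype V] [Fintype E] [DecidableEq V] [DecidableEq E]

/-- The vector in `F₂^V` which is the sum of the two endpoints of the edge `e`
(so a loop is sent to `0`). -/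
def edgeVec (G : Multigraph V E) (e : E) : V → ZMod 2 := fun v =>
  Sym2.lift ⟨fun a b => (if v = a then (1 : ZMod 2) else 0) + (if v = b then 1 else 0),
    fun _ _ => add_comm _ _⟩ (G.ends e)

/-- The boundary map `δ : F₂^E → F₂^V`, sending each edge to the sum of its two
adjacent vertices. -/
def boundary (G : Multigraph V E) : (E → ZMod 2) →ₗ[ZMod 2] (V → ZMod 2) where
  toFun c := fun v => ∑ e, c e * G.edgeVec e v
  map_add' c d := by
    funext v
    simp [add_mul, Finset.sum_add_distrib]
  map_smul' r c := by
    funext v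
    simp [Finset.mul_sum, mul_assoc]

/-- The Cycle Space of `G` : the kernel of the boundary map. -/
def cycleSpace (G : Multigraph V E) : Submodule (ZMod 2) (E → ZMod 2) :=
  LinearMap.ker G.boundary

/-- The indicator vector of a vertex in `F₂^V`. -/
def vert (v : V) : V → ZMod 2 := fun w => if w = v then 1 else 0

/-- A `k`-weak homological cycle: a homological path between two `k`-edge-connected
vertices. -/
def IsWeakCycle (G : Multigraph V E) (k : ℕ) (c : E → ZMod 2) : Prop :=
  ∃ v w, G.KConn k v w ∧ G.boundary c = vert v + vert w

/-- The `k`-Weak Cycle Space: the span of all `k`-weak homological cycles. -/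
def weakCycleSpace (G : Multigraph V E) (k : ℕ) : Submodule (ZMod 2) (E → ZMod 2) :=
  Submodule.span (ZMod 2) {c | G.IsWeakCycle k c}

/-- `eps p` : the set of edges of the ttrail `p`, as a vector in `F₂^E`. -/
def eps (p : List (V × E)) : E → ZMod 2 := fun e => if e ∈ p.map Prod.snd then 1 else 0

/-- The `F₂`-linear extension of `f : E → A` to subsets of `E`: the sum of `f` over
the edges of the subset `S`. -/
def fSum {A : Type*} [AddCommGroup A] (f : E → A) (S : E → ZMod 2) : A :=
  ∑ e ∈ Finset.univ.filter fun e => S e = 1, f e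

end Homology

section Balanced

variable {A : Type*} [AddCommGroup A]

/-- The sum `g(v₁)+f(e₁)+…+g(vₙ)+f(eₙ)` of the values of a vertex-function `g` and an
edge-function `f` along a ttrail `v₁,e₁,…,vₙ,eₙ`. -/
def pathSum (g : V → A) (f : E → A) (p : List (V × E)) : A :=
  (p.map fun ve => g ve.1 + f ve.2).sum

/-- The sum `h(v₁)+h(e₁)+…+h(vₙ)+h(eₙ)` of the values of `h : V ∪ E → A` along a
ttrail `v₁,e₁,…,vₙ,eₙ`. -/
def wSum (h : V ⊕ E → A) (p : List (V × E)) : A :=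
  (p.map fun ve => h (Sum.inl ve.1) + h (Sum.inr ve.2)).sum

lemma pathSum_cons (g : V → A) (f : E → A) (a : V × E) (t : List (V × E)) :
    pathSum g f (a :: t) = (g a.1 + f a.2) + pathSum g f t := by
  simp [pathSum]

lemma pathSum_zero (p : List (V × E)) : pathSum (0 : V → A) (0 : E → A) p = 0 := by
  induction p with
  | nil => simp [pathSum]
  | cons a t ih => simp [pathSum_cons, ih]

lemma pathSum_add (g g' : V → A) (f f' : E → A) (p : List (V × E)) :
    pathSum (g + g') (f + f') p = pathSum g f p + pathSum g' f' p := by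
  induction p with
  | nil => simp [pathSum]
  | cons a t ih => simp only [pathSum_cons, Pi.add_apply, ih]; abel

lemma pathSum_neg (g : V → A) (f : E → A) (p : List (V × E)) :
    pathSum (-g) (-f) p = -pathSum g f p := by
  induction p with
  | nil => simp [pathSum]
  | cons a t ih => simp only [pathSum_cons, Pi.neg_apply, ih]; abel

lemma wSum_cons (h : V ⊕ E → A) (a : V × E) (t : List (V × E)) :
    wSum h (a :: t) = (h (Sum.inl a.1) + h (Sum.inr a.2)) + wSum h t := by
  simp [wSum]

lemma wSum_zero (p : List (V × E)) : wSum (0 : V ⊕ E → A) p = 0 := by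
  induction p with
  | nil => simp [wSum]
  | cons a t ih => simp [wSum_cons, ih]

lemma wSum_add (h h' : V ⊕ E → A) (p : List (V × E)) :
    wSum (h + h') p = wSum h p + wSum h' p := by
  induction p with
  | nil => simp [wSum]
  | cons a t ih => simp only [wSum_cons, Pi.add_apply, ih]; abel

lemma wSum_neg (h : V ⊕ E → A) (p : List (V × E)) :
    wSum (-h) p = -wSum h p := by
  induction p with
  | nil => simp [wSum]
  | cons a t ih => simp only [wSum_cons, Pi.neg_apply, ih]; abel

/-- A function `f : E → A` is balanced if the sum of its values along every closed
ttrail of `G` is zero. -/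
def BalancedE (G : Multigraph V E) (f : E → A) : Prop :=
  ∀ x p, G.IsTtrail x x p → pathSum (0 : V → A) f p = 0

/-- A function `g : V → A` is balanceable if some `f : E → A` balances it, i.e. the
sum of the values of `g` and `f` along every closed ttrail of `G` is zero. -/
def Balanceable (G : Multigraph V E) (g : V → A) : Prop :=
  ∃ f : E → A, ∀ x p, G.IsTtrail x x p → pathSum g f p = 0

/-- A function `h : V ∪ E → A` is balanced if the sum of its values along every
closed ttrail of `G` is zero. -/
def BalancedW (G : Multigraph V E) (h : V ⊕ E → A) : Prop :=
  ∀ x p, G.IsTtrail x x p → wSum h p = 0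

/-- `H(E,A)` : the group of balanced functions from `E` to `A`. -/
def Hgroup (G : Multigraph V E) (A : Type*) [AddCommGroup A] : AddSubgroup (E → A) where
  carrier := {f | G.BalancedE f}
  zero_mem' := fun _ p _ => pathSum_zero p
  add_mem' := by
    intro f f' hf hf' x p hp
    have h := pathSum_add (0 : V → A) 0 f f' p
    rw [add_zero] at h
    rw [h, hf x p hp, hf' x p hp, add_zero]
  neg_mem' := by
    intro f hf x p hp
    have h := pathSum_neg (0 : V → A) f p
    rw [neg_zero] at h
    rw [h, hf x p hp, neg_zero]

/-- `B(V,A)` : the group of balanceable functions from `V` to `A`. -/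
def Bgroup (G : Multigraph V E) (A : Type*) [AddCommGroup A] : AddSubgroup (V → A) where
  carrier := {g | G.Balanceable g}
  zero_mem' := ⟨0, fun _ p _ => pathSum_zero p⟩
  add_mem' := by
    rintro g g' ⟨f, hf⟩ ⟨f', hf'⟩
    exact ⟨f + f', fun x p hp => by rw [pathSum_add, hf x p hp, hf' x p hp, add_zero]⟩
  neg_mem' := by
    rintro g ⟨f, hf⟩
    exact ⟨-f, fun x p hp => by rw [pathSum_neg, hf x p hp, neg_zero]⟩

/-- `W(V ∪ E, A)` : the group of balanced functions from `V ∪ E` to `A`. -/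
def Wgroup (G : Multigraph V E) (A : Type*) [AddCommGroup A] : AddSubgroup (V ⊕ E → A) where
  carrier := {h | G.BalancedW h}
  zero_mem' := fun _ p _ => wSum_zero p
  add_mem' := by
    intro h h' hh hh' x p hp
    rw [wSum_add, hh x p hp, hh' x p hp, add_zero]
  neg_mem' := by
    intro h hh x p hp
    rw [wSum_neg, hh x p hp, neg_zero]

end Balanced

/-- A `3`-weakly closed ttrail (a ttrail between `3`-edge-connected vertices) which is
short: no inner vertex is `3`-edge-connected to the initial vertex. -/
def ShortW (G : Multigraph V E) (x y : V) (p : List (V × E)) : Prop :=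
  G.IsTtrail x y p ∧ G.KConn 3 x y ∧ ∀ v ∈ (p.map Prod.fst).tail, ¬ G.KConn 3 v x

/-- `G.ShortChain x y L` : `L` is a list of nontrivial short `3`-weakly closed ttrails
which concatenate into a ttrail from `x` to `y`. -/
def ShortChain (G : Multigraph V E) : V → V → List (List (V × E)) → Prop
  | x, y, [] => x = y
  | x, y, s :: rest => s ≠ [] ∧ ∃ z, G.ShortW x z s ∧ G.ShortChain z y rest

/-- `A₂` : the subgroup of elements of order dividing `2` in `A`. -/
def torsion2 (A : Type*) [AddCommGroup A] : AddSubgroup A where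
  carrier := {a | 2 • a = 0}
  zero_mem' := by simp
  add_mem' := by
    intro a b ha hb
    simp only [Set.mem_setOf_eq] at *
    rw [smul_add, ha, hb, add_zero]
  neg_mem' := by
    intro a ha
    simp only [Set.mem_setOf_eq] at *
    rw [smul_neg, ha, neg_zero]

/-- `2A` : the image of the doubling map `a ↦ 2a`. -/
def double2 (A : Type*) [AddCommGroup A] : AddSubgroup A where
  carrier := {b | ∃ a, b = 2 • a}
  zero_mem' := ⟨0, by simp⟩
  add_mem' := by
    rintro a b ⟨x, rfl⟩ ⟨y, rfl⟩
    exact ⟨x + y, by rw [smul_add]⟩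
  neg_mem' := by
    rintro a ⟨x, rfl⟩
    exact ⟨-x, by rw [smul_neg]⟩

end Multigraph

namespace Multigraph

section XHelpers

variable {V E : Type*}

lemma xchain_append (G : Multigraph V E) (x y : V) (p q : List (V × E)) :
    G.IsChain x y (p ++ q) ↔ ∃ z, G.IsChain x z p ∧ G.IsChain z y q := by
  induction p generalizing x with
  | nil => simp [IsChain]
  | cons a p ih =>
    obtain ⟨u, e⟩ := a
    simp only [List.cons_append, IsChain, ih]
    constructor
    · rintro ⟨h1, c, h2, z, h3, h4⟩
      exact ⟨z, ⟨h1, c, h2, h3⟩, h4⟩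
    · rintro ⟨z, ⟨h1, c, h2, h3⟩, h4⟩
      exact ⟨h1, c, h2, z, h3, h4⟩

lemma xtrail_of_chain (G : Multigraph V E) (x y : V) (p : List (V × E))
    (hp : G.IsChain x y p) : ∃ q, G.IsTtrail x y q ∧ ∀ a ∈ q, a ∈ p := by
  induction p generalizing x with
  | nil => exact ⟨[], ⟨hp, by simp⟩, by simp⟩
  | cons a p ih =>
    obtain ⟨u, e⟩ := a
    obtain ⟨rfl, z, hz, hc⟩ := hp
    obtain ⟨q, ⟨hq, hnd⟩, hsub⟩ := ih z hc
    by_cases he : e ∈ q.map Prod.snd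
    · obtain ⟨⟨c, e'⟩, hmem, rfl⟩ := List.mem_map.1 he
      obtain ⟨q1, q2, rfl⟩ := List.append_of_mem hmem
      obtain ⟨d, -, hd⟩ := (G.xchain_append _ _ _ _).1 hq
      obtain ⟨rfl, d', hd', hq2⟩ := hd
      have hnd2 : (((c, e') :: q2).map Prod.snd).Nodup := by
        rw [List.map_append] at hnd
        exact (List.nodup_append.1 hnd).2.1
      simp only at hz
      rw [hz] at hd'
      rcases Sym2.eq_iff.1 hd' with ⟨rfl, rfl⟩ | ⟨rfl, rfl⟩
      · refine ⟨(u, e') :: q2, ⟨⟨rfl, z, hz, hq2⟩, hnd2⟩, ?_⟩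
        intro a ha
        exact List.mem_cons_of_mem _ (hsub a (by simp at ha ⊢; tauto))
      · refine ⟨q2, ⟨hq2, ?_⟩, ?_⟩
        · simp only [List.map_cons, List.nodup_cons] at hnd2
          exact hnd2.2
        · intro a ha
          exact List.mem_cons_of_mem _ (hsub a (by simp [ha]))
    · refine ⟨(u, e) :: q, ⟨⟨rfl, z, hz, hq⟩, ?_⟩, ?_⟩
      · simp only [List.map_cons, List.nodup_cons]
        exact ⟨he, hnd⟩
      · intro a ha
        rcases List.mem_cons.1 ha with rfl | ha
        · simp
        · exact List.mem_cons_of_mem _ (hsub a ha)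

lemma xreach (G : Multigraph V E) (v w : V) (U : V × E → Prop) :
    (∃ q, G.IsTtrail v w q ∧ ∀ a ∈ q, U a) ∨
    ∃ S : Set V, v ∈ S ∧ w ∉ S ∧ ∀ x y e, x ∈ S → y ∉ S → G.ends e = s(x, y) → ¬ U (x, e) := by
  by_cases h : ∃ p, G.IsChain v w p ∧ ∀ a ∈ p, U a
  · left
    obtain ⟨p, hp, hU⟩ := h
    obtain ⟨q, hq, hs⟩ := G.xtrail_of_chain v w p hp
    exact ⟨q, hq, fun a ha => hU a (hs a ha)⟩
  · right
    refine ⟨{x | ∃ p, G.IsChain v x p ∧ ∀ a ∈ p, U a}, ⟨[], rfl, by simp⟩, h, ?_⟩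
    rintro x y e ⟨p, hp, hpU⟩ hy he hU
    refine hy ⟨p ++ [(x, e)], (G.xchain_append _ _ _ _).2 ⟨x, hp, rfl, y, he, rfl⟩, ?_⟩
    intro a ha
    rcases List.mem_append.1 ha with ha | ha
    · exact hpU a ha
    · rw [List.mem_singleton.1 ha]; exact hU

lemma xcross (G : Multigraph V E) (S : Set V) (x y : V) (p : List (V × E))
    (hp : G.IsChain x y p) (hx : x ∈ S) (hy : y ∉ S) :
    ∃ a b e, e ∈ p.map Prod.snd ∧ a ∈ S ∧ b ∉ S ∧ G.ends e = s(a, b) := by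
  induction p generalizing x with
  | nil => exact absurd (hp ▸ hx) hy
  | cons a p ih =>
    obtain ⟨u, e⟩ := a
    obtain ⟨rfl, z, hz, hc⟩ := hp
    by_cases hzS : z ∈ S
    · obtain ⟨a, b, e', h1, h2⟩ := ih z hc hzS
      exact ⟨a, b, e', by simp only [List.map_cons]; exact List.mem_cons_of_mem _ h1, h2⟩
    · exact ⟨u, z, e, by simp, hx, hzS, hz⟩

noncomputable def xs (G : Multigraph V E) (e : E) : V := (Quot.out (G.ends e)).1
noncomputable def xt (G : Multigraph V E) (e : E) : V := (Quot.out (G.ends e)).2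

lemma xends (G : Multigraph V E) (e : E) : G.ends e = s(G.xs e, G.xt e) :=
  (Quot.out_eq (G.ends e)).symm

open Classical in
noncomputable def xsig (G : Multigraph V E) (a : V × E) : ℤ :=
  if a.1 = G.xs a.2 then 1 else -1

lemma xsig_eq (G : Multigraph V E) (x y : V) (e : E) (he : G.ends e = s(x, y)) (h : V → ℤ) :
    G.xsig (x, e) * (h (G.xs e) - h (G.xt e)) = h x - h y := by
  rw [G.xends] at he
  rcases Sym2.eq_iff.1 he with ⟨h1, h2⟩ | ⟨h1, h2⟩
  · simp [xsig, h1, h2]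
  · by_cases hx : x = G.xs e
    · have : y = x := by rw [hx, h1]
      simp [h1, h2, this]
    · simp only [xsig, if_neg hx, h1, h2]; ring

open Classical in
noncomputable def xphi (G : Multigraph V E) : List (V × E) → E → ℤ
  | [], _ => 0
  | a :: p, e => (if e = a.2 then G.xsig a else 0) + xphi G p e

lemma xphi_not (G : Multigraph V E) (p : List (V × E)) (e : E) (he : e ∉ p.map Prod.snd) :
    G.xphi p e = 0 := by
  induction p with
  | nil => rfl
  | cons a p ih =>
    simp only [List.map_cons, List.mem_cons, not_or] at he
    simp [xphi, he.1, ih he.2]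

lemma xphi_mem (G : Multigraph V E) (p : List (V × E)) (hp : (p.map Prod.snd).Nodup)
    (a : V × E) (ha : a ∈ p) : G.xphi p a.2 = G.xsig a := by
  induction p with
  | nil => simp at ha
  | cons b p ih =>
    simp only [List.map_cons, List.nodup_cons] at hp
    rcases List.mem_cons.1 ha with rfl | ha
    · simp [xphi, G.xphi_not p _ hp.1]
    · have : a.2 ≠ b.2 := fun h => hp.1 (h ▸ List.mem_map_of_mem ha)
      simp [xphi, this, ih hp.2 ha]

noncomputable def XB [Fintype E] (G : Multigraph V E) (f : E → ℤ) (h : V → ℤ) : ℤ :=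
  ∑ e, f e * (h (G.xs e) - h (G.xt e))

lemma XB_phi [Fintype E] (G : Multigraph V E) (x y : V) (p : List (V × E))
    (hp : G.IsChain x y p) (h : V → ℤ) : G.XB (G.xphi p) h = h x - h y := by
  induction p generalizing x with
  | nil =>
    have : x = y := hp
    simp [XB, xphi, this]
  | cons a p ih =>
    obtain ⟨u, e⟩ := a
    obtain ⟨rfl, z, hz, hc⟩ := hp
    have := ih z hc
    unfold XB at this ⊢
    simp only [xphi, add_mul, Finset.sum_add_distrib, this, ite_mul, zero_mul]
    rw [Finset.sum_eq_single e (fun b _ hb => by rw [if_neg hb]) (by simp), if_pos rfl]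
    rw [G.xsig_eq u z e hz]; ring

def XFlow [Fintype E] (G : Multigraph V E) (v w : V) (n : ℕ) (f : E → ℤ) : Prop :=
  (∀ e, |f e| ≤ 1) ∧ ∀ h : V → ℤ, G.XB f h = n * (h v - h w)

lemma xsig_or (G : Multigraph V E) (a : V × E) : G.xsig a = 1 ∨ G.xsig a = -1 := by
  unfold xsig; split_ifs <;> simp

lemma xaugment [Fintype E] (G : Multigraph V E) (v w : V) (hvw : v ≠ w) (n : ℕ) (f : E → ℤ)
    (hf : G.XFlow v w n f)
    (H : ∀ F : Finset E, F.card ≤ n →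
        ∃ q : List (V × E), G.IsTtrail v w q ∧ ∀ e ∈ q.map Prod.snd, e ∉ F) :
    ∃ g, G.XFlow v w (n + 1) g := by
  classical
  obtain ⟨hf1, hf2⟩ := hf
  rcases G.xreach v w (fun a => |f a.2 + G.xsig a| ≤ 1) with ⟨q, hq, hU⟩ | ⟨S, hv, hw, hS⟩
  · refine ⟨fun e => f e + G.xphi q e, ?_, ?_⟩
    · intro e
      by_cases he : e ∈ q.map Prod.snd
      · obtain ⟨a, ha, rfl⟩ := List.mem_map.1 he
        simp only [G.xphi_mem q hq.2 a ha]
        exact hU a ha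
      · simp only [G.xphi_not q e he, add_zero]; exact hf1 e
    · intro h
      have h1 := hf2 h
      have h2 := G.XB_phi v w q hq.1 h
      unfold XB at h1 h2 ⊢
      simp only [add_mul, Finset.sum_add_distrib, h1, h2]
      push_cast; ring
  · exfalso
    let F : Finset E := Finset.univ.filter fun e => ¬ (G.xs e ∈ S ↔ G.xt e ∈ S)
    have h1 := hf2 (fun x => if x ∈ S then 1 else 0)
    have h2 : G.XB f (fun x => if x ∈ S then 1 else 0) = F.card := by
      rw [Finset.card_filter, XB]
      push_cast
      refine Finset.sum_congr rfl fun e _ => ?_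
      have hb := abs_le.1 (hf1 e)
      by_cases hs : G.xs e ∈ S <;> by_cases ht : G.xt e ∈ S
      · simp [hs, ht]
      · have := hS _ _ e hs ht (G.xends e)
        simp only [xsig, if_true, abs_le] at this
        simp [hs, ht]; omega
      · have := hS _ _ e ht hs (by rw [G.xends e, Sym2.eq_swap])
        have hne : G.xt e ≠ G.xs e := fun h => hs (h ▸ ht)
        simp only [xsig, if_neg hne, abs_le] at this
        simp [hs, ht]; omega
      · simp [hs, ht]
    rw [h2] at h1
    simp only [hv, hw, if_true, if_false] at h1
    have hc : F.card = n := by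
      have : (F.card : ℤ) = n := by rw [h1]; ring
      exact_mod_cast this
    obtain ⟨q, hq, hqF⟩ := H F hc.le
    obtain ⟨a, b, e, he, ha, hb, hab⟩ := G.xcross S v w q hq.1 hv hw
    refine hqF e he ?_
    simp only [F, Finset.mem_filter, Finset.mem_univ, true_and]
    rw [G.xends] at hab
    rcases Sym2.eq_iff.1 hab with ⟨h1, h2⟩ | ⟨h1, h2⟩ <;> rw [h1, h2] <;> tauto

lemma xdecomp [Fintype E] (G : Multigraph V E) (v w : V) (hvw : v ≠ w) (n : ℕ) (f : E → ℤ)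
    (hf : G.XFlow v w n f) :
    ∃ p : Fin n → List (V × E), (∀ i, G.IsTtrail v w (p i)) ∧
      (∀ i j, i ≠ j → EdgeDisjoint (p i) (p j)) ∧ ∀ i, ∀ e ∈ (p i).map Prod.snd, f e ≠ 0 := by
  classical
  induction n generalizing f with
  | zero => exact ⟨fun _ => [], fun i => i.elim0, fun i => i.elim0, fun i => i.elim0⟩
  | succ n ih =>
    obtain ⟨hf1, hf2⟩ := hf
    rcases G.xreach v w (fun a => f a.2 = G.xsig a) with ⟨q, hq, hU⟩ | ⟨S, hv, hw, hS⟩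
    · have hin : ∀ e ∈ q.map Prod.snd, f e - G.xphi q e = 0 ∧ f e ≠ 0 := by
        intro e he
        obtain ⟨a, ha, rfl⟩ := List.mem_map.1 he
        rw [G.xphi_mem q hq.2 a ha, hU a ha]
        rcases G.xsig_or a with h | h <;> simp [h]
      have hout : ∀ e, e ∉ q.map Prod.snd → f e - G.xphi q e = f e := by
        intro e he
        rw [G.xphi_not q e he, sub_zero]
      obtain ⟨p, hp, hd, hne⟩ := ih (fun e => f e - G.xphi q e) ⟨by
        intro e
        by_cases he : e ∈ q.map Prod.snd
        · simp only [(hin e he).1]; simp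
        · simp only [hout e he]; exact hf1 e, by
        intro h
        have h1 := hf2 h
        have h2 := G.XB_phi v w q hq.1 h
        unfold XB at h1 h2 ⊢
        simp only [sub_mul, Finset.sum_sub_distrib, h1, h2]
        push_cast; ring⟩
      have hpq : ∀ i, ∀ e ∈ (p i).map Prod.snd, e ∉ q.map Prod.snd :=
        fun i e he heq => hne i e he (hin e heq).1
      refine ⟨Fin.cons q p, ?_, ?_, ?_⟩
      · intro i
        refine Fin.cases ?_ (fun i => ?_) i
        · exact hq
        · exact hp i
      · intro i j
        refine Fin.cases ?_ (fun i => ?_) i <;> refine Fin.cases ?_ (fun j => ?_) j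
        · intro h; exact absurd rfl h
        · intro _ e h1 h2
          exact hpq j e h2 h1
        · intro _ e h1 h2
          exact hpq i e h1 h2
        · intro h
          exact hd i j (fun h' => h (by rw [h']))
      · intro i
        refine Fin.cases ?_ (fun i => ?_) i
        · exact fun e he => (hin e he).2
        · intro e he
          have he' : e ∈ (p i).map Prod.snd := he
          have := hne i e he'
          simp only [hout e (hpq i e he')] at this
          exact this
    · exfalso
      have h1 := hf2 (fun x => if x ∈ S then 1 else 0)
      have h2 : G.XB f (fun x => if x ∈ S then 1 else 0) ≤ 0 := by
        refine Finset.sum_nonpos fun e _ => ?_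
        have hb := abs_le.1 (hf1 e)
        by_cases hs : G.xs e ∈ S <;> by_cases ht : G.xt e ∈ S
        · simp [hs, ht]
        · have := hS _ _ e hs ht (G.xends e)
          simp only [xsig, if_true] at this
          simp [hs, ht]; omega
        · have := hS _ _ e ht hs (by rw [G.xends e, Sym2.eq_swap])
          have hne : G.xt e ≠ G.xs e := fun h => hs (h ▸ ht)
          simp only [xsig, if_neg hne] at this
          simp [hs, ht]; omega
        · simp [hs, ht]
      rw [h1] at h2
      simp only [hv, hw, if_true, if_false] at h2
      push_cast at h2
      omega

end XHelpers

variable {V E : Type*} [Fintype V] [Fintype E] [DecidableEq V] [DecidableEq E]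


theorem stmt3 (G : Multigraph V E) (v w : V) (hvw : v ≠ w) (k : ℕ) :
    (∃ p : Fin k → List (V × E), (∀ i, G.IsTtrail v w (p i)) ∧
        ∀ i j, i ≠ j → EdgeDisjoint (p i) (p j)) ↔
      ∀ F : Finset E, F.card < k →
        ∃ q : List (V × E), G.IsTtrail v w q ∧ ∀ e ∈ q.map Prod.snd, e ∉ F := by
  constructor
  · rintro ⟨p, hp, hd⟩ F hF
    by_contra! hcon
    have h1 : ∀ i, ∃ e ∈ (p i).map Prod.snd, e ∈ F := fun i => hcon (p i) (hp i)
    choose g hg1 hg2 using h1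
    have hinj : Function.Injective g := by
      intro i j hij
      by_contra hne
      exact hd i j hne (g i) (hg1 i) (hij ▸ hg1 j)
    have : (Finset.univ : Finset (Fin k)).card ≤ F.card :=
      Finset.card_le_card_of_injOn g (fun i _ => hg2 i) (fun i _ j _ h => hinj h)
    simp at this
    omega
  · intro H
    have key : ∀ n, n ≤ k → ∃ f, G.XFlow v w n f := by
      intro n
      induction n with
      | zero =>
        intro _
        exact ⟨0, by simp, by simp [XB]⟩
      | succ n ih =>
        intro hn
        obtain ⟨f, hf⟩ := ih (by omega)
        exact G.xaugment v w hvw n f hf (fun F hF => H F (by omega))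
    obtain ⟨f, hf⟩ := key k le_rfl
    obtain ⟨p, hp, hd, -⟩ := G.xdecomp v w hvw k f hf
    exact ⟨p, hp, hd⟩

end Multigraph
end

section
/- Let G be a finite undirected multigraph and k a positive integer. The dimension over F₂ of the k-Weak Cycle Space of G equals |E| − con_k(G) + con(G), where con_k(G) is the number of equivalence classes of k-edge-connected vertices and con(G) is the number of connected components of G. -/
open Finset

namespace Multigraph

variable {V E : Type*} [Fintype V] [Fintype E] [DecidableEq V] [DecidableEq E]


/-- The span of sums of related vertices. -/
def relSpan (R : V → V → Prop) : Submodule (ZMod 2) (V → ZMod 2) :=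
  Submodule.span (ZMod 2) {x | ∃ v w, R v w ∧ x = vert v + vert w}

lemma vec_add_self {I : Type*} (x : I → ZMod 2) : x + x = 0 := by
  funext i
  exact CharTwo.add_self_eq_zero (x i)

lemma relSpan_eqvGen (R : V → V → Prop) {v w : V} (h : Relation.EqvGen R v w) :
    (vert v + vert w : V → ZMod 2) ∈ relSpan R := by
  induction h with
  | rel x y h => exact Submodule.subset_span ⟨x, y, h, rfl⟩
  | refl x => rw [vec_add_self]; exact Submodule.zero_mem _
  | symm x y _ ih => rwa [add_comm]
  | trans x y z _ _ h1 h2 =>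
    have h := Submodule.add_mem _ h1 h2
    have e : (vert x + vert y + (vert y + vert z) : V → ZMod 2) = vert x + vert z := by
      rw [add_assoc, ← add_assoc (vert y), vec_add_self, zero_add]
    rwa [e] at h

lemma sum_smul_vert (x : V → ZMod 2) : ∑ v, x v • (vert v : V → ZMod 2) = x := by
  funext u
  simp [vert, Finset.sum_apply]

open Classical in
lemma finrank_relSpan (R : V → V → Prop) :
    Module.finrank (ZMod 2) (relSpan R) +
      Nat.card (Quotient (Relation.EqvGen.setoid R)) = Fintype.card V := by
  let s := Relation.EqvGen.setoid R
  let φ : (V → ZMod 2) →ₗ[ZMod 2] (Quotient s → ZMod 2) :=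
    { toFun := fun x q => ∑ v, if Quotient.mk s v = q then x v else 0
      map_add' := by
        intro x y; funext q
        simp only [Pi.add_apply, ← Finset.sum_add_distrib]
        refine Finset.sum_congr rfl fun v _ => ?_
        split_ifs <;> simp
      map_smul' := by
        intro r x; funext q
        simp only [Pi.smul_apply, smul_eq_mul, Finset.mul_sum, RingHom.id_apply]
        refine Finset.sum_congr rfl fun v _ => ?_
        split_ifs <;> simp }
  have hφ : ∀ x q, φ x q = ∑ v, if Quotient.mk s v = q then x v else 0 := fun _ _ => rfl
  have hvert : ∀ v q, φ (vert v) q = if Quotient.mk s v = q then 1 else 0 := by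
    intro v q
    rw [hφ, Finset.sum_eq_single v]
    · simp [vert]
    · intro b _ hb; simp [vert, hb]
    · simp
  have hsurj : Function.Surjective φ := by
    intro y
    refine ⟨∑ q, y q • vert q.out, ?_⟩
    rw [map_sum]
    funext q
    simp [Finset.sum_apply, hvert]
  have hker : LinearMap.ker φ = relSpan R := by
    apply le_antisymm
    · intro x hx
      rw [LinearMap.mem_ker] at hx
      have h1 : ∑ v, x v • (vert v + vert (Quotient.mk s v).out : V → ZMod 2) ∈ relSpan R := by
        refine Submodule.sum_mem _ fun v _ => Submodule.smul_mem _ _ (relSpan_eqvGen R ?_)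
        exact (Quotient.mk_out (s := s) v).symm
      have h2 : ∑ v, x v • (vert (Quotient.mk s v).out : V → ZMod 2)
          = ∑ q, φ x q • (vert q.out : V → ZMod 2) := by
        simp only [hφ, Finset.sum_smul]
        rw [Finset.sum_comm]
        refine Finset.sum_congr rfl fun v _ => ?_
        rw [Finset.sum_eq_single (Quotient.mk s v)]
        · simp
        · intro b _ hb; simp [hb.symm]
        · simp
      simp only [smul_add, Finset.sum_add_distrib, sum_smul_vert, h2, hx] at h1
      simpa using h1
    · refine Submodule.span_le.2 ?_
      rintro _ ⟨v, w, h, rfl⟩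
      rw [SetLike.mem_coe, LinearMap.mem_ker]
      funext q
      have : Quotient.mk s v = Quotient.mk s w := Quotient.sound (Relation.EqvGen.rel _ _ h)
      rw [map_add, Pi.add_apply, hvert, hvert, this]
      exact CharTwo.add_self_eq_zero _
  have h := φ.finrank_range_add_finrank_ker
  rw [LinearMap.range_eq_top.2 hsurj, hker, finrank_top, Module.finrank_fintype_fun_eq_card,
    Module.finrank_fintype_fun_eq_card] at h
  have hc : Nat.card (Quotient (Relation.EqvGen.setoid R)) = Fintype.card (Quotient s) :=
    Nat.card_eq_fintype_card
  rw [hc]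
  omega

lemma boundary_single (G : Multigraph V E) (e : E) :
    G.boundary (Pi.single e 1) = G.edgeVec e := by
  funext v
  simp [boundary, Pi.single_apply]

lemma edgeVec_eq (G : Multigraph V E) {e : E} {a b : V} (h : G.ends e = s(a, b)) :
    G.edgeVec e = vert a + vert b := by
  funext v
  simp [edgeVec, h, vert]

lemma chain_mem_range (G : Multigraph V E) (p : List (V × E)) : ∀ x y, G.IsChain x y p →
    (vert x + vert y : V → ZMod 2) ∈ LinearMap.range G.boundary := by
  induction p with
  | nil =>
    intro x y h
    have h : x = y := h
    rw [h, vec_add_self]; exact Submodule.zero_mem _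
  | cons a t ih =>
    intro x y h
    obtain ⟨_, w, he, ht⟩ := h
    have h1 := ih w y ht
    have h2 : (vert x + vert w : V → ZMod 2) ∈ LinearMap.range G.boundary :=
      ⟨Pi.single a.2 1, by rw [boundary_single, edgeVec_eq G he]⟩
    have h := Submodule.add_mem _ h2 h1
    rwa [add_assoc, ← add_assoc (vert w), vec_add_self, zero_add] at h

lemma kconn_mem_range (G : Multigraph V E) {k : ℕ} (hk : 0 < k) {v w : V} (h : G.KConn k v w) :
    (vert v + vert w : V → ZMod 2) ∈ LinearMap.range G.boundary := by
  rcases h with rfl | ⟨p, hp, _⟩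
  · rw [vec_add_self]; exact Submodule.zero_mem _
  · exact chain_mem_range G _ _ _ (hp ⟨0, hk⟩).1

lemma range_boundary (G : Multigraph V E) :
    LinearMap.range G.boundary = relSpan (G.KConn 1) := by
  apply le_antisymm
  · rintro _ ⟨c, rfl⟩
    have : G.boundary c = ∑ e, c e • G.edgeVec e := by
      funext v; simp [boundary, Finset.sum_apply]
    rw [this]
    refine Submodule.sum_mem _ fun e _ => Submodule.smul_mem _ _ ?_
    obtain ⟨a, b, hab⟩ : ∃ a b, G.ends e = s(a, b) := by
      induction h : G.ends e with
      | h a b => exact ⟨a, b, rfl⟩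
    rw [edgeVec_eq G hab]
    refine Submodule.subset_span ⟨a, b, Or.inr ⟨fun _ => [(a, e)], fun _ => ?_, ?_⟩, rfl⟩
    · exact ⟨⟨rfl, b, hab, rfl⟩, by simp⟩
    · intro i j hij; exact absurd (Subsingleton.elim i j) hij
  · refine Submodule.span_le.2 ?_
    rintro _ ⟨v, w, h, rfl⟩
    exact kconn_mem_range G one_pos h

lemma map_weak (G : Multigraph V E) {k : ℕ} (hk : 0 < k) :
    (G.weakCycleSpace k).map G.boundary = relSpan (G.KConn k) := by
  rw [weakCycleSpace, Submodule.map_span, relSpan]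
  congr 1
  ext x
  constructor
  · rintro ⟨c, ⟨v, w, h, hc⟩, rfl⟩
    exact ⟨v, w, h, hc⟩
  · rintro ⟨v, w, h, rfl⟩
    obtain ⟨c, hc⟩ := kconn_mem_range G hk h
    exact ⟨c, ⟨v, w, h, hc⟩, hc⟩

lemma ker_le_weak (G : Multigraph V E) (k : ℕ) :
    LinearMap.ker G.boundary ≤ G.weakCycleSpace k := by
  intro c hc
  rcases isEmpty_or_nonempty V with hV | ⟨⟨v⟩⟩
  · have : c = 0 := by
      funext e
      induction G.ends e with
      | h a b => exact hV.elim a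
    rw [this]; exact Submodule.zero_mem _
  · exact Submodule.subset_span ⟨v, v, Or.inl rfl, by rw [vec_add_self]; exact hc⟩

theorem stmt5 (G : Multigraph V E) (k : ℕ) (hk : 0 < k) :
    (Module.finrank (ZMod 2) (G.weakCycleSpace k) : ℤ) =
      (Fintype.card E : ℤ) - (G.conk k : ℤ) + (G.con : ℤ) := by
  have h1 := (G.boundary.domRestrict (G.weakCycleSpace k)).finrank_range_add_finrank_ker
  have h2 := G.boundary.finrank_range_add_finrank_ker
  have h3 := finrank_relSpan (G.KConn k)
  have h4 := finrank_relSpan (G.KConn 1)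
  have h5 : Module.finrank (ZMod 2)
      (LinearMap.ker (G.boundary.domRestrict (G.weakCycleSpace k))) =
      Module.finrank (ZMod 2) (LinearMap.ker G.boundary) := by
    rw [LinearMap.ker_domRestrict]
    exact (Submodule.comapSubtypeEquivOfLe (ker_le_weak G k)).finrank_eq
  rw [LinearMap.range_domRestrict, map_weak G hk, h5] at h1
  rw [range_boundary, Module.finrank_fintype_fun_eq_card] at h2
  simp only [con, conk]
  omega

end Multigraph
end

section
/- Let G be a finite undirected multigraph, let v₁,...,v_k be (not necessarily pairwise distinct) vertices all belonging to the same k-edge-connected equivalence class, and let u be a vertex. If there exist k pairwise edge-disjoint ttrails connecting u to the vertices v₁,...,v_k (the i-th ttrail going from u to v_i), then u is k-edge-connected to v₁. -/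
open Finset

namespace Multigraph

variable {V E : Type*} [Fintype V] [Fintype E] [DecidableEq V] [DecidableEq E]


set_option linter.unusedSectionVars false

/-- Tail of the reference orientation. -/
noncomputable def refA (G : Multigraph V E) (e : E) : V := (Quot.out (G.ends e)).1
/-- Head of the reference orientation. -/
noncomputable def refB (G : Multigraph V E) (e : E) : V := (Quot.out (G.ends e)).2

lemma ends_eq (G : Multigraph V E) (e : E) : G.ends e = s(G.refA e, G.refB e) :=
  (Quot.out_eq (G.ends e)).symm

def DStep (G : Multigraph V E) (ε : ℤ) (e : E) (x y : V) : Prop :=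
  (ε = 1 ∧ x = G.refA e ∧ y = G.refB e) ∨ (ε = -1 ∧ x = G.refB e ∧ y = G.refA e)

def ind (x v : V) : ℤ := if v = x then 1 else 0

noncomputable def dv (G : Multigraph V E) (f : E → ℤ) (v : V) : ℤ :=
  ∑ e, f e * (ind (G.refA e) v - ind (G.refB e) v)

inductive SP (G : Multigraph V E) (P : E → ℤ → Prop) (y : V) : V → List (V × E) → Prop
  | nil : SP G P y y []
  | cons (x w : V) (e : E) (ε : ℤ) (p : List (V × E)) (hs : G.DStep ε e x w) (hP : P e ε)
      (hw : SP G P y w p) (hx : x ∉ p.map Prod.fst) (hxy : x ≠ y) : SP G P y x ((x, e) :: p)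

lemma SP.suffix {G : Multigraph V E} {P : E → ℤ → Prop} {y x : V} {p : List (V × E)}
    (h : SP G P y x p) : ∀ z ∈ p.map Prod.fst, ∃ q, SP G P y z q := by
  induction h with
  | nil => simp
  | cons x w e ε p hs hP hw hx hxy ih =>
    intro z hz
    rw [List.map_cons, List.mem_cons] at hz
    rcases hz with rfl | hz
    · exact ⟨_, SP.cons _ w e ε p hs hP hw hx hxy⟩
    · exact ih z hz

lemma SP.of_reach {G : Multigraph V E} {P : E → ℤ → Prop} {y x : V}
    (h : Relation.ReflTransGen (fun a b => ∃ e ε, G.DStep ε e a b ∧ P e ε) x y) :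
    ∃ q, SP G P y x q := by
  induction h using Relation.ReflTransGen.head_induction_on with
  | refl => exact ⟨[], SP.nil⟩
  | @head a b hab _ ih =>
    obtain ⟨q, hq⟩ := ih
    obtain ⟨e, ε, hs, hP⟩ := hab
    by_cases hay : a = y
    · subst hay; exact ⟨[], SP.nil⟩
    by_cases ha : a ∈ q.map Prod.fst
    · exact hq.suffix a ha
    · exact ⟨_, SP.cons a b e ε q hs hP hq ha hay⟩

lemma SP.start {G : Multigraph V E} {P : E → ℤ → Prop} {y x : V} {p : List (V × E)}
    (h : SP G P y x p) : x = y ∨ x ∈ p.map Prod.fst := by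
  cases h <;> simp

lemma SP.endpoints {G : Multigraph V E} {P : E → ℤ → Prop} {y x : V} {p : List (V × E)}
    (h : SP G P y x p) : ∀ e ∈ p.map Prod.snd,
      (G.refA e = y ∨ G.refA e ∈ p.map Prod.fst) ∧ (G.refB e = y ∨ G.refB e ∈ p.map Prod.fst) := by
  induction h with
  | nil => simp
  | cons x w e ε p hs hP hw hx hxy ih =>
    intro e' he
    have h1 := hw.start
    rw [List.map_cons, List.mem_cons] at he
    simp only [List.map_cons, List.mem_cons]
    rcases he with rfl | he
    · rcases hs with ⟨_, h2, h3⟩ | ⟨_, h2, h3⟩ <;> rw [← h2, ← h3] <;> tauto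
    · have := ih e' he
      tauto

lemma DStep.ends {G : Multigraph V E} {ε : ℤ} {e : E} {x y : V} (h : G.DStep ε e x y) :
    G.ends e = s(x, y) := by
  rcases h with ⟨_, rfl, rfl⟩ | ⟨_, rfl, rfl⟩
  · exact G.ends_eq e
  · rw [Sym2.eq_swap]; exact G.ends_eq e

lemma SP.flow {G : Multigraph V E} {P : E → ℤ → Prop} {y x : V} {p : List (V × E)}
    (h : SP G P y x p) : G.IsTtrail x y p ∧ ∃ g : E → ℤ,
      (∀ e ∉ p.map Prod.snd, g e = 0) ∧
      (∀ e ∈ p.map Prod.snd, (g e = 1 ∨ g e = -1) ∧ P e (g e)) ∧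
      ∀ v, G.dv g v = ind x v - ind y v := by
  induction h with
  | nil => exact ⟨⟨rfl, by simp⟩, 0, by simp, by simp, by simp [dv]⟩
  | cons x w e ε p hs hP hw hx hxy ih =>
    obtain ⟨⟨hc, hn⟩, g, h0, h1, hd⟩ := ih
    have he : e ∉ p.map Prod.snd := by
      intro he
      have := hw.endpoints e he
      rcases hs with ⟨_, h2, h3⟩ | ⟨_, h2, h3⟩ <;> rw [← h2, ← h3] at this <;> tauto
    refine ⟨⟨⟨rfl, w, hs.ends, hc⟩, by rw [List.map_cons, List.nodup_cons]; exact ⟨he, hn⟩⟩,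
      fun e' => g e' + if e' = e then ε else 0, ?_, ?_, ?_⟩
    · intro e' he'
      rw [List.map_cons, List.mem_cons, not_or] at he'
      have h3 : e' ≠ e := he'.1
      simp [h3, h0 e' he'.2]
    · intro e' he'
      rw [List.map_cons, List.mem_cons] at he'
      by_cases h3 : e' = e
      · subst h3
        simp only [h0 e' he, if_true, zero_add]
        exact ⟨by rcases hs with h | h <;> simp [h.1], hP⟩
      · simp only [h3, if_false, add_zero]
        exact h1 e' (he'.resolve_left h3)
    · intro v
      have : G.dv (fun e' => g e' + if e' = e then ε else 0) v
          = G.dv g v + ε * (ind (G.refA e) v - ind (G.refB e) v) := by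
        simp [dv, add_mul, Finset.sum_add_distrib]
      rw [this, hd v]
      rcases hs with ⟨rfl, rfl, rfl⟩ | ⟨rfl, rfl, rfl⟩ <;> ring

lemma dv_add (G : Multigraph V E) (f g : E → ℤ) (v : V) :
    G.dv (fun e => f e + g e) v = G.dv f v + G.dv g v := by
  simp [dv, add_mul, Finset.sum_add_distrib]

lemma dv_sub (G : Multigraph V E) (f g : E → ℤ) (v : V) :
    G.dv (fun e => f e - g e) v = G.dv f v - G.dv g v := by
  simp [dv, sub_mul, Finset.sum_sub_distrib]

def mem01 (S : Finset V) (x : V) : ℤ := if x ∈ S then 1 else 0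

lemma sum_ind (S : Finset V) (x : V) : ∑ v ∈ S, ind x v = mem01 S x := by
  simp [ind, mem01]

lemma cut_sum (G : Multigraph V E) (f : E → ℤ) (S : Finset V) :
    ∑ v ∈ S, G.dv f v = ∑ e, f e * (mem01 S (G.refA e) - mem01 S (G.refB e)) := by
  unfold dv
  rw [Finset.sum_comm]
  refine Finset.sum_congr rfl fun e _ => ?_
  rw [← Finset.mul_sum, Finset.sum_sub_distrib, sum_ind, sum_ind]

/-- Either `y` is reachable, or there is a closed separating set. -/
lemma reach_or_cut (G : Multigraph V E) (P : E → ℤ → Prop) (x y : V) :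
    (∃ q, SP G P y x q) ∨ ∃ S : Finset V, x ∈ S ∧ y ∉ S ∧
      ∀ e, (P e 1 → G.refA e ∈ S → G.refB e ∈ S) ∧ (P e (-1) → G.refB e ∈ S → G.refA e ∈ S) := by
  classical
  by_cases h : Relation.ReflTransGen (fun a b => ∃ e ε, G.DStep ε e a b ∧ P e ε) x y
  · exact Or.inl (SP.of_reach h)
  · refine Or.inr ⟨Finset.univ.filter fun z =>
      Relation.ReflTransGen (fun a b => ∃ e ε, G.DStep ε e a b ∧ P e ε) x z, ?_, ?_, ?_⟩
    · simp [Relation.ReflTransGen.refl]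
    · simpa using h
    · intro e
      simp only [Finset.mem_filter, Finset.mem_univ, true_and]
      exact ⟨fun hP ha => ha.tail ⟨e, 1, Or.inl ⟨rfl, rfl, rfl⟩, hP⟩,
        fun hP ha => ha.tail ⟨e, -1, Or.inr ⟨rfl, rfl, rfl⟩, hP⟩⟩

def cut (G : Multigraph V E) (S : Finset V) : Set E :=
  {e | ¬ (G.refA e ∈ S ↔ G.refB e ∈ S)}

lemma flow_cut (G : Multigraph V E) (f : E → ℤ) (m : ℤ) (x y : V)
    (hd : ∀ v, G.dv f v = m * (ind x v - ind y v)) (S : Finset V) (hx : x ∈ S) (hy : y ∉ S) :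
    m = ∑ e, f e * (mem01 S (G.refA e) - mem01 S (G.refB e)) := by
  rw [← cut_sum, Finset.sum_congr rfl fun v _ => hd v, ← Finset.mul_sum, Finset.sum_sub_distrib,
    sum_ind, sum_ind]
  simp [mem01, hx, hy]

lemma exists_flow (G : Multigraph V E) (k : ℕ) (x y : V)
    (hcut : ∀ S : Finset V, x ∈ S → y ∉ S → k ≤ (G.cut S).ncard) (m : ℕ) (hm : m ≤ k) :
    ∃ f : E → ℤ, (∀ e, -1 ≤ f e ∧ f e ≤ 1) ∧
      ∀ v, G.dv f v = (m : ℤ) * (ind x v - ind y v) := by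
  classical
  induction m with
  | zero => exact ⟨fun _ => 0, by simp, by simp [dv]⟩
  | succ m ih =>
    obtain ⟨f, hf, hd⟩ := ih (by omega)
    rcases reach_or_cut G (fun e ε => -1 ≤ f e + ε ∧ f e + ε ≤ 1) x y with ⟨q, hq⟩ | ⟨S, hx, hy, hS⟩
    · obtain ⟨-, g, h0, h1, hg⟩ := hq.flow
      refine ⟨fun e => f e + g e, fun e => ?_, fun v => ?_⟩
      · by_cases he : e ∈ q.map Prod.snd
        · exact (h1 e he).2
        · simpa [h0 e he] using hf e
      · rw [dv_add, hd, hg]; push_cast; ring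
    · exfalso
      have h := flow_cut G f m x y hd S hx hy
      have h2 : ∑ e, f e * (mem01 S (G.refA e) - mem01 S (G.refB e))
          = ∑ e, if e ∈ G.cut S then (1 : ℤ) else 0 := by
        refine Finset.sum_congr rfl fun e _ => ?_
        have hf' := hf e
        have hS' := hS e
        by_cases ha : G.refA e ∈ S <;> by_cases hb : G.refB e ∈ S <;>
          simp [mem01, cut, ha, hb] at hS' ⊢ <;> omega
      rw [h2] at h
      have h3 := hcut S hx hy
      rw [Set.ncard_eq_toFinset_card'] at h3
      rw [Finset.sum_boole, Nat.cast_inj] at h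
      have h4 : (Finset.univ.filter fun e => e ∈ G.cut S) = (G.cut S).toFinset := by ext; simp
      rw [h4] at h
      omega

lemma decomp (G : Multigraph V E) (x y : V) (m : ℕ) : ∀ f : E → ℤ, (∀ e, -1 ≤ f e ∧ f e ≤ 1) →
    (∀ v, G.dv f v = (m : ℤ) * (ind x v - ind y v)) →
    ∃ p : Fin m → List (V × E), (∀ i, G.IsTtrail x y (p i)) ∧
      (∀ i j, i ≠ j → EdgeDisjoint (p i) (p j)) ∧ ∀ i, ∀ e ∈ (p i).map Prod.snd, f e ≠ 0 := by
  induction m with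
  | zero => intro f _ _; exact ⟨fun _ => [], fun i => i.elim0, fun i => i.elim0, fun i => i.elim0⟩
  | succ m ih =>
    intro f hf hd
    rcases reach_or_cut G (fun e ε => f e = ε) x y with ⟨q, hq⟩ | ⟨S, hx, hy, hS⟩
    · obtain ⟨ht, g, h0, h1, hg⟩ := hq.flow
      obtain ⟨p, hp1, hp2, hp3⟩ := ih (fun e => f e - g e)
        (fun e => by
          by_cases he : e ∈ q.map Prod.snd
          · simp [(h1 e he).2]
          · simpa [h0 e he] using hf e)
        (fun v => by rw [dv_sub, hd, hg]; push_cast; ring)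
      have hq' : ∀ i, ∀ e ∈ (p i).map Prod.snd, e ∉ q.map Prod.snd := by
        intro i e he he'
        exact hp3 i e he (by simp [(h1 e he').2])
      refine ⟨Fin.cons q p, ?_, ?_, ?_⟩
      · intro i
        refine Fin.cases ?_ (fun i => ?_) i
        · simpa using ht
        · simpa using hp1 i
      · intro i j
        refine Fin.cases ?_ (fun i => ?_) i <;> refine Fin.cases ?_ (fun j => ?_) j
        · intro h; exact absurd rfl h
        · intro _ e he he'
          rw [Fin.cons_zero] at he
          rw [Fin.cons_succ] at he'
          exact hq' j e he' he
        · intro _ e he he'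
          rw [Fin.cons_zero] at he'
          rw [Fin.cons_succ] at he
          exact hq' i e he he'
        · intro hij
          rw [Fin.cons_succ, Fin.cons_succ]
          exact hp2 i j fun h => hij (by rw [h])
      · intro i
        refine Fin.cases ?_ (fun i => ?_) i
        · rw [Fin.cons_zero]
          intro e he
          have h2 := h1 e he
          rw [h2.2]
          omega
        · rw [Fin.cons_succ]
          intro e he h
          have h2 := hp3 i e he
          rw [h0 e (hq' i e he), h] at h2
          exact h2 (by simp)
    · exfalso
      have h := flow_cut G f _ x y hd S hx hy
      have h2 : ∑ e, f e * (mem01 S (G.refA e) - mem01 S (G.refB e)) ≤ 0 := by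
        refine Finset.sum_nonpos fun e _ => ?_
        have hf' := hf e
        have hS' := hS e
        by_cases ha : G.refA e ∈ S <;> by_cases hb : G.refB e ∈ S <;>
          simp [mem01, ha, hb] at hS' ⊢ <;> omega
      push_cast at h
      omega

lemma chain_cross (G : Multigraph V E) (S : Finset V) (p : List (V × E)) : ∀ x y,
    G.IsChain x y p → x ∈ S → y ∉ S → ∃ e ∈ p.map Prod.snd, e ∈ G.cut S := by
  induction p with
  | nil => intro x y h hx hy; exact absurd (h ▸ hx) hy
  | cons a p ih =>
    obtain ⟨v, e⟩ := a
    rintro x y ⟨_, w, he, hc⟩ hx hy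
    by_cases hw : w ∈ S
    · obtain ⟨e', h1, h2⟩ := ih w y hc hw hy
      exact ⟨e', by rw [List.map_cons]; exact List.mem_cons_of_mem _ h1, h2⟩
    · refine ⟨e, by simp, ?_⟩
      rw [ends_eq, Sym2.eq_iff] at he
      rcases he with ⟨h1, h2⟩ | ⟨h1, h2⟩ <;> simp [cut, h1, h2, hx, hw]

lemma cut_ge (G : Multigraph V E) (S : Finset V) (k : ℕ) (x y : Fin k → V)
    (p : Fin k → List (V × E)) (hp : ∀ i, G.IsTtrail (x i) (y i) (p i))
    (hdisj : ∀ i j, i ≠ j → EdgeDisjoint (p i) (p j)) (hx : ∀ i, x i ∈ S) (hy : ∀ i, y i ∉ S) :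
    k ≤ (G.cut S).ncard := by
  classical
  choose c hc hc' using fun i => chain_cross G S (p i) (x i) (y i) (hp i).1 (hx i) (hy i)
  have hinj : Function.Injective c := by
    intro i j hij
    by_contra hne
    exact hdisj i j hne (c i) (hc i) (hij ▸ hc j)
  have h1 : (Set.range c).ncard = k := by
    rw [← Set.image_univ, Set.ncard_image_of_injective _ hinj, Set.ncard_univ]; simp
  rw [← h1]
  exact Set.ncard_le_ncard (by rintro _ ⟨i, rfl⟩; exact hc' i) (Set.toFinite _)

theorem stmt7 (G : Multigraph V E) (k : ℕ) (hk : 0 < k) (v : Fin k → V)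
    (hsame : ∀ i j, G.KConn k (v i) (v j)) (u : V)
    (p : Fin k → List (V × E)) (hp : ∀ i, G.IsTtrail u (v i) (p i))
    (hdisj : ∀ i j, i ≠ j → EdgeDisjoint (p i) (p j)) :
    G.KConn k u (v ⟨0, hk⟩) := by
  have hcut : ∀ S : Finset V, u ∈ S → v ⟨0, hk⟩ ∉ S → k ≤ (G.cut S).ncard := by
    intro S hu h0
    by_cases h : ∃ i, v i ∈ S
    · obtain ⟨i, hi⟩ := h
      rcases hsame i ⟨0, hk⟩ with h | ⟨q, hq, hq'⟩
      · exact absurd (h ▸ hi) h0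
      · exact cut_ge G S k _ _ q hq hq' (fun _ => hi) (fun _ => h0)
    · exact cut_ge G S k _ _ p hp hdisj (fun _ => hu) (fun i hi => h ⟨i, hi⟩)
  obtain ⟨f, hf, hd⟩ := exists_flow G k u _ hcut k le_rfl
  obtain ⟨q, hq1, hq2, -⟩ := decomp G u _ k f hf hd
  exact Or.inr ⟨q, hq1, hq2⟩

end Multigraph
end

section
/- Let G be a finite undirected multigraph. Every non-trivial 3-weakly closed ttrail c of G can be written as a concatenation c₁+...+cₘ of non-trivial short 3-weakly closed ttrails c₁,...,cₘ, and this decomposition is unique. -/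
open Finset

namespace Multigraph

section Aux

variable {V E : Type*}

/-- Connectivity using only edges in `U`. -/
def RU (G : Multigraph V E) (U : Set E) : V → V → Prop :=
  Relation.ReflTransGen (fun a b => ∃ e ∈ U, G.ends e = s(a, b))

lemma RU.symm' {G : Multigraph V E} {U : Set E} {a b : V} (h : G.RU U a b) : G.RU U b a := by
  induction h with
  | refl => exact Relation.ReflTransGen.refl
  | tail _ hbc ih =>
    obtain ⟨e, he, h2⟩ := hbc
    exact Relation.ReflTransGen.head ⟨e, he, by rw [h2, Sym2.eq_swap]⟩ ih

lemma RU.mono {G : Multigraph V E} {U U' : Set E} (hU : U ⊆ U') {a b : V} (h : G.RU U a b) :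
    G.RU U' a b := by
  induction h with
  | refl => exact Relation.ReflTransGen.refl
  | tail _ hbc ih =>
    obtain ⟨e, he, h2⟩ := hbc
    exact Relation.ReflTransGen.tail ih ⟨e, hU he, h2⟩

lemma isChain_append (G : Multigraph V E) (p q : List (V × E)) (a b : V) :
    G.IsChain a b (p ++ q) ↔ ∃ z, G.IsChain a z p ∧ G.IsChain z b q := by
  induction p generalizing a with
  | nil => simp [IsChain]
  | cons h t ih =>
    obtain ⟨v, e⟩ := h
    simp only [List.cons_append, IsChain, ih]
    constructor
    · rintro ⟨h1, w, h2, z, h3, h4⟩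
      exact ⟨z, ⟨h1, w, h2, h3⟩, h4⟩
    · rintro ⟨z, ⟨h1, w, h2, h3⟩, h4⟩
      exact ⟨h1, w, h2, z, h3, h4⟩

lemma isChain_end_unique (G : Multigraph V E) (p : List (V × E)) (a b b' : V)
    (h : G.IsChain a b p) (h' : G.IsChain a b' p) : b = b' := by
  induction p generalizing a with
  | nil => exact h.symm.trans h'
  | cons hd t ih =>
    obtain ⟨v, e⟩ := hd
    obtain ⟨_, w, h2, h3⟩ := h
    obtain ⟨_, w', h2', h3'⟩ := h'
    rw [h2] at h2'
    have : w = w' := Sym2.congr_right.mp h2'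
    subst this
    exact ih _ h3 h3'

lemma cons_trail (G : Multigraph V E) {a w b : V} {e : E} {q : List (V × E)}
    (he : G.ends e = s(a, w)) (hq : G.IsTtrail w b q) :
    ∃ r, G.IsTtrail a b r ∧ ∀ f ∈ r.map Prod.snd, f = e ∨ f ∈ q.map Prod.snd := by
  by_cases hm : e ∈ q.map Prod.snd
  · obtain ⟨⟨v, e'⟩, hve, rfl⟩ := List.mem_map.mp hm
    obtain ⟨l1, l2, rfl⟩ := List.append_of_mem hve
    obtain ⟨hch, hnd⟩ := hq
    obtain ⟨z, _, hz⟩ := (isChain_append G _ _ _ _).mp hch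
    have hnd2 : (((v, e') :: l2).map Prod.snd).Nodup := by
      rw [List.map_append] at hnd
      exact (List.nodup_append.mp hnd).2.1
    have hz' := hz
    obtain ⟨rfl, w', h2, h3⟩ := hz'
    dsimp only at he
    rw [he] at h2
    rcases Sym2.eq_iff.mp h2 with ⟨rfl, rfl⟩ | ⟨rfl, rfl⟩
    · exact ⟨_, ⟨hz, hnd2⟩, fun f hf => Or.inr (by rw [List.map_append]; exact List.mem_append_right _ hf)⟩
    · refine ⟨l2, ⟨h3, ?_⟩, fun f hf => Or.inr ?_⟩
      · rw [List.map_cons] at hnd2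
        exact (List.nodup_cons.mp hnd2).2
      · rw [List.map_append]
        exact List.mem_append_right _ (by rw [List.map_cons]; exact List.mem_cons_of_mem _ hf)
  · refine ⟨(a, e) :: q, ⟨⟨rfl, w, he, hq.1⟩, ?_⟩, ?_⟩
    · rw [List.map_cons]; exact List.nodup_cons.mpr ⟨hm, hq.2⟩
    · intro f hf
      simpa using hf

lemma RU.trail {G : Multigraph V E} {U : Set E} {a b : V} (h : G.RU U a b) :
    ∃ p, G.IsTtrail a b p ∧ ∀ f ∈ p.map Prod.snd, f ∈ U := by
  induction h using Relation.ReflTransGen.head_induction_on with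
  | refl => exact ⟨[], ⟨rfl, by simp⟩, by simp⟩
  | head hac _ ih =>
    obtain ⟨e, heU, he⟩ := hac
    obtain ⟨q, hq, hqU⟩ := ih
    obtain ⟨r, hr, hrU⟩ := cons_trail G he hq
    exact ⟨r, hr, fun f hf => (hrU f hf).elim (fun h => h ▸ heU) (hqU f)⟩

lemma IsChain.ru {G : Multigraph V E} {a b : V} {p : List (V × E)} (h : G.IsChain a b p) :
    G.RU {e | e ∈ p.map Prod.snd} a b := by
  induction p generalizing a with
  | nil => cases h; exact Relation.ReflTransGen.refl
  | cons hd t ih =>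
    obtain ⟨v, e⟩ := hd
    obtain ⟨rfl, w, h2, h3⟩ := h
    refine Relation.ReflTransGen.head ⟨e, by simp, h2⟩ (RU.mono ?_ (ih h3))
    intro f hf
    simp only [Set.mem_setOf_eq, List.map_cons] at hf ⊢
    exact List.mem_cons_of_mem _ hf

lemma IsChain.ru_prefix [DecidableEq E] {G : Multigraph V E} {a b : V} {p : List (V × E)}
    (h : G.IsChain a b p) {e : E} (he : e ∈ p.map Prod.snd) {u w : V} (hu : G.ends e = s(u, w)) :
    G.RU {f | f ∈ p.map Prod.snd ∧ (p.map Prod.snd).idxOf f ≤ (p.map Prod.snd).idxOf e} a u := by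
  induction p generalizing a with
  | nil => simp at he
  | cons hd t ih =>
    obtain ⟨v, e0⟩ := hd
    obtain ⟨rfl, w0, h2, h3⟩ := h
    by_cases hee : e = e0
    · subst hee
      rw [h2] at hu
      rcases Sym2.eq_iff.mp hu with ⟨rfl, rfl⟩ | ⟨rfl, rfl⟩
      · exact Relation.ReflTransGen.refl
      · exact Relation.ReflTransGen.single ⟨e, by simp, h2⟩
    · have he' : e ∈ t.map Prod.snd := by
        rw [List.map_cons] at he
        exact (List.mem_cons.mp he).resolve_left hee
      refine Relation.ReflTransGen.head ⟨e0, by simp, h2⟩ (RU.mono ?_ (ih h3 he'))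
      rintro f ⟨hf1, hf2⟩
      refine ⟨by rw [List.map_cons]; exact List.mem_cons_of_mem _ hf1, ?_⟩
      rw [List.map_cons, List.idxOf_cons_ne _ (Ne.symm hee)]
      by_cases hfe : f = e0
      · subst hfe; simp
      · rw [List.idxOf_cons_ne _ (Ne.symm hfe)]
        simpa using hf2

lemma kconn_iff (G : Multigraph V E) (k : ℕ) (v w : V) : G.KConn k v w ↔
    v = w ∨ ∃ U : Fin k → Set E, (∀ i, G.RU (U i) v w) ∧
      ∀ i j, ∀ e, e ∈ U i → e ∈ U j → i = j := by
  refine or_congr_right ⟨?_, ?_⟩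
  · rintro ⟨p, hp, hd⟩
    refine ⟨fun i => {e | e ∈ (p i).map Prod.snd}, fun i => (hp i).1.ru, ?_⟩
    intro i j e hi hj
    by_contra hij
    exact hd i j hij e hi hj
  · rintro ⟨U, hU, hd⟩
    choose p hp hpU using fun i => (hU i).trail
    refine ⟨p, hp, fun i j hij e hi hj => hij (hd i j e (hpU i e hi) (hpU j e hj))⟩

lemma KConn.symm' {G : Multigraph V E} {k : ℕ} {v w : V} (h : G.KConn k v w) :
    G.KConn k w v := by
  rw [kconn_iff] at h ⊢
  rcases h with rfl | ⟨U, hU, hd⟩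
  · exact Or.inl rfl
  · exact Or.inr ⟨U, fun i => (hU i).symm', hd⟩

/-- Stable matching with parallel edges (Gale-Shapley through Knaster-Tarski). -/
lemma stable_exists {k : ℕ} (A B : Fin k → Set E) (rA rB : Fin k → E → ℕ)
    (hA : ∀ i j e, e ∈ A i → e ∈ A j → i = j) (hB : ∀ i j e, e ∈ B i → e ∈ B j → i = j)
    (iA : ∀ i, Set.InjOn (rA i) (A i)) (iB : ∀ i, Set.InjOn (rB i) (B i)) :
    ∃ S : Set E, (∀ s ∈ S, (∃ i, s ∈ A i) ∧ ∃ j, s ∈ B j) ∧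
      (∀ i, ∀ s ∈ S, ∀ t ∈ S, s ∈ A i → t ∈ A i → s = t) ∧
      (∀ i, ∀ s ∈ S, ∀ t ∈ S, s ∈ B i → t ∈ B i → s = t) ∧
      ∀ i j e, e ∈ A i → e ∈ B j →
        (∃ s ∈ S, s ∈ A i ∧ rA i s ≤ rA i e) ∨ (∃ s ∈ S, s ∈ B j ∧ rB j s ≤ rB j e) := by
  classical
  let M : Set E := {e | (∃ i, e ∈ A i) ∧ ∃ j, e ∈ B j}
  let DA : Set E → Set E := fun X => {e | e ∈ X ∧ ∃ i, e ∈ A i ∧ ∃ f ∈ X, f ∈ A i ∧ rA i f < rA i e}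
  let DB : Set E → Set E := fun X => {e | e ∈ X ∧ ∃ i, e ∈ B i ∧ ∃ f ∈ X, f ∈ B i ∧ rB i f < rB i e}
  have mA : Monotone DA := by
    rintro X Y h e ⟨h1, i, h2, f, h3, h4⟩
    exact ⟨h h1, i, h2, f, h h3, h4⟩
  have mB : Monotone DB := by
    rintro X Y h e ⟨h1, i, h2, f, h3, h4⟩
    exact ⟨h h1, i, h2, f, h h3, h4⟩
  let F : Set E →o Set E := ⟨fun X => M \ DB (M \ DA X), fun X Y h =>
    Set.diff_subset_diff_right (mB (Set.diff_subset_diff_right (mA h)))⟩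
  obtain ⟨X, hX⟩ : ∃ X, M \ DB (M \ DA X) = X := ⟨F.lfp, F.map_lfp⟩
  obtain ⟨Y, hY⟩ : ∃ Y, M \ DA X = Y := ⟨_, rfl⟩
  rw [hY] at hX
  have hXM : ∀ e ∈ X, e ∈ M ∧ e ∉ DB Y := fun e he => by rw [← hX] at he; exact he
  have hYM : ∀ e ∈ Y, e ∈ M ∧ e ∉ DA X := fun e he => by rw [← hY] at he; exact he
  have hXM' : ∀ e ∈ M, e ∉ DB Y → e ∈ X := fun e h1 h2 => by rw [← hX]; exact ⟨h1, h2⟩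
  have hYM' : ∀ e ∈ M, e ∉ DA X → e ∈ Y := fun e h1 h2 => by rw [← hY]; exact ⟨h1, h2⟩
  refine ⟨X ∩ Y, fun s hs => (hXM s hs.1).1, ?_, ?_, ?_⟩
  · intro i s hs t ht hsi hti
    refine iA i hsi hti ?_
    by_contra hne
    rcases lt_or_gt_of_ne hne with h | h
    · exact (hYM t ht.2).2 ⟨ht.1, i, hti, s, hs.1, hsi, h⟩
    · exact (hYM s hs.2).2 ⟨hs.1, i, hsi, t, ht.1, hti, h⟩
  · intro i s hs t ht hsi hti
    refine iB i hsi hti ?_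
    by_contra hne
    rcases lt_or_gt_of_ne hne with h | h
    · exact (hXM t ht.1).2 ⟨ht.2, i, hti, s, hs.2, hsi, h⟩
    · exact (hXM s hs.1).2 ⟨hs.2, i, hsi, t, ht.2, hti, h⟩
  · intro i j e hei hej
    have heM : e ∈ M := ⟨⟨i, hei⟩, j, hej⟩
    by_cases heX : e ∈ X
    · left
      have hwf := (measure (rA i)).wf
      have hne : (X ∩ A i).Nonempty := ⟨e, heX, hei⟩
      obtain ⟨h1, h2⟩ := hwf.min_mem (X ∩ A i) hne
      have hmin : ∀ f ∈ X ∩ A i, ¬ rA i f < rA i (hwf.min (X ∩ A i) hne) :=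
        fun f hf => hwf.not_lt_min (X ∩ A i) hf
      refine ⟨_, ⟨h1, hYM' _ (hXM _ h1).1 ?_⟩, h2, not_lt.mp (hmin e ⟨heX, hei⟩)⟩
      rintro ⟨_, i', h3, f, h4, h5, h6⟩
      obtain rfl := hA _ _ _ h2 h3
      exact hmin f ⟨h4, h5⟩ h6
    · right
      have heY : e ∈ Y := by
        by_contra h
        exact heX (hXM' e heM fun h' => h h'.1)
      have hwf := (measure (rB j)).wf
      have hne : (Y ∩ B j).Nonempty := ⟨e, heY, hej⟩
      obtain ⟨h1, h2⟩ := hwf.min_mem (Y ∩ B j) hne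
      have hmin : ∀ f ∈ Y ∩ B j, ¬ rB j f < rB j (hwf.min (Y ∩ B j) hne) :=
        fun f hf => hwf.not_lt_min (Y ∩ B j) hf
      refine ⟨_, ⟨hXM' _ (hYM _ h1).1 ?_, h1⟩, h2, not_lt.mp (hmin e ⟨heY, hej⟩)⟩
      rintro ⟨_, i', h3, f, h4, h5, h6⟩
      obtain rfl := hB _ _ _ h2 h3
      exact hmin f ⟨h4, h5⟩ h6

lemma perm_exists {k : ℕ} (A B : Fin k → Set E) (S : Set E)
    (hA : ∀ i j e, e ∈ A i → e ∈ A j → i = j) (hB : ∀ i j e, e ∈ B i → e ∈ B j → i = j)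
    (hS : ∀ s ∈ S, (∃ i, s ∈ A i) ∧ ∃ j, s ∈ B j)
    (uA : ∀ i, ∀ s ∈ S, ∀ t ∈ S, s ∈ A i → t ∈ A i → s = t)
    (uB : ∀ i, ∀ s ∈ S, ∀ t ∈ S, s ∈ B i → t ∈ B i → s = t) :
    ∃ σ : Equiv.Perm (Fin k), ∀ s ∈ S, ∀ i, s ∈ A i ↔ s ∈ B (σ i) := by
  classical
  let p : Fin k → Prop := fun i => ∃ s ∈ S, s ∈ A i
  have hf : ∀ i : {i // p i}, ∃ j, ∃ s ∈ S, s ∈ A i ∧ s ∈ B j := by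
    rintro ⟨i, s, hs, hi⟩
    obtain ⟨j, hj⟩ := (hS s hs).2
    exact ⟨j, s, hs, hi, hj⟩
  choose f s hsS hsA hsB using hf
  have hinj : Function.Injective f := by
    intro i i' h
    have h1 := hsB i
    rw [h] at h1
    have h2 := uB _ _ (hsS i) _ (hsS i') h1 (hsB i')
    have h3 := hsA i
    rw [h2] at h3
    exact Subtype.ext (hA _ _ _ h3 (hsA i'))
  let e : {i // p i} ≃ {j // j ∈ Set.range f} := Equiv.ofInjective f hinj
  have key : ∀ t ∈ S, ∀ i, t ∈ A i → t ∈ B (e.extendSubtype i) := by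
    intro t ht i hi
    have hp : p i := ⟨t, ht, hi⟩
    rw [Equiv.extendSubtype_apply_of_mem e i hp]
    have h2 := uA i _ (hsS ⟨i, hp⟩) t ht (hsA ⟨i, hp⟩) hi
    have h3 := hsB ⟨i, hp⟩
    rw [h2] at h3
    exact h3
  refine ⟨e.extendSubtype, fun t ht i => ⟨key t ht i, fun h => ?_⟩⟩
  obtain ⟨i', hi'⟩ := (hS t ht).1
  have := hB _ _ _ h (key t ht i' hi')
  rw [e.extendSubtype.injective this]
  exact hi'

lemma KConn.trans' {G : Multigraph V E} {k : ℕ} {x y z : V} (h : G.KConn k x y)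
    (h' : G.KConn k y z) : G.KConn k x z := by
  classical
  have h'' := h'.symm'
  rcases h with rfl | ⟨P, hP, dP⟩
  · exact h'
  rcases h'' with rfl | ⟨Q, hQ, dQ⟩
  · exact Or.inr ⟨P, hP, dP⟩
  have hA : ∀ i j e, e ∈ (P i).map Prod.snd → e ∈ (P j).map Prod.snd → i = j := by
    intro i j e hi hj
    by_contra hij
    exact dP i j hij e hi hj
  have hB : ∀ i j e, e ∈ (Q i).map Prod.snd → e ∈ (Q j).map Prod.snd → i = j := by
    intro i j e hi hj
    by_contra hij
    exact dQ i j hij e hi hj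
  obtain ⟨S, hS, uA, uB, st⟩ := stable_exists (fun i => {e | e ∈ (P i).map Prod.snd})
    (fun i => {e | e ∈ (Q i).map Prod.snd}) (fun i e => ((P i).map Prod.snd).idxOf e)
    (fun i e => ((Q i).map Prod.snd).idxOf e) hA hB
    (fun i e he f hf hef => (List.idxOf_inj he).mp hef)
    (fun i e he f hf hef => (List.idxOf_inj he).mp hef)
  obtain ⟨σ, hσ⟩ := perm_exists _ _ S hA hB hS uA uB
  simp only [Set.mem_setOf_eq] at hS uA uB st hσ
  rw [kconn_iff]
  right
  let UA : Fin k → Set E := fun i => {e | e ∈ (P i).map Prod.snd ∧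
    ∀ s ∈ S, s ∈ (P i).map Prod.snd → ((P i).map Prod.snd).idxOf e ≤ ((P i).map Prod.snd).idxOf s}
  let UB : Fin k → Set E := fun i => {e | e ∈ (Q i).map Prod.snd ∧
    ∀ s ∈ S, s ∈ (Q i).map Prod.snd → ((Q i).map Prod.snd).idxOf e ≤ ((Q i).map Prod.snd).idxOf s}
  have cross : ∀ i j e, e ∈ UA i → e ∈ UB (σ j) → i = j := by
    rintro i j e ⟨h1, h2⟩ ⟨h3, h4⟩
    rcases st i (σ j) e h1 h3 with ⟨s, hs, hsi, hle⟩ | ⟨s, hs, hsi, hle⟩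
    · have : e = s := (List.idxOf_inj h1).mp (le_antisymm (h2 s hs hsi) hle)
      subst this
      exact σ.injective (hB _ _ _ ((hσ e hs i).mp h1) h3)
    · have : e = s := (List.idxOf_inj h3).mp (le_antisymm (h4 s hs hsi) hle)
      subst this
      exact hA _ _ _ h1 ((hσ e hs j).mpr h3)
  refine ⟨fun i => UA i ∪ UB (σ i), fun i => ?_, ?_⟩
  · by_cases hm : ∃ s ∈ S, s ∈ (P i).map Prod.snd
    · obtain ⟨s, hs, hsi⟩ := hm
      have hsj := (hσ s hs i).mp hsi
      obtain ⟨u, w, huw⟩ : ∃ u w, G.ends s = s(u, w) := by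
        induction h : G.ends s using Sym2.ind with
        | _ u w => exact ⟨u, w, rfl⟩
      have r1 := (hP i).1.ru_prefix hsi huw
      have r2 := (hQ (σ i)).1.ru_prefix hsj huw
      refine Relation.ReflTransGen.trans (RU.mono ?_ r1) (RU.mono ?_ r2).symm'
      · rintro f ⟨hf1, hf2⟩
        refine Or.inl ⟨hf1, fun t ht hti => ?_⟩
        rw [uA i t ht s hs hti hsi]; exact hf2
      · rintro f ⟨hf1, hf2⟩
        refine Or.inr ⟨hf1, fun t ht hti => ?_⟩
        rw [uB (σ i) t ht s hs hti hsj]; exact hf2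
    · refine Relation.ReflTransGen.trans (RU.mono ?_ (hP i).1.ru) (RU.mono ?_ (hQ (σ i)).1.ru).symm'
      · intro f hf
        exact Or.inl ⟨hf, fun s hs hsi => absurd ⟨s, hs, hsi⟩ hm⟩
      · intro f hf
        exact Or.inr ⟨hf, fun s hs hsi => absurd ⟨s, hs, (hσ s hs i).mpr hsi⟩ hm⟩
  · rintro i j e (hi | hi) (hj | hj)
    · exact hA _ _ _ hi.1 hj.1
    · exact cross _ _ _ hi hj
    · exact (cross _ _ _ hj hi).symm
    · exact σ.injective (hB _ _ _ hi.1 hj.1)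

lemma short_exists (G : Multigraph V E) (n : ℕ) : ∀ (x y : V) (c : List (V × E)),
    c.length ≤ n → G.IsTtrail x y c → G.KConn 3 x y →
    ∃ L : List (List (V × E)), L.flatten = c ∧ G.ShortChain x y L := by
  classical
  induction n with
  | zero =>
    intro x y c hn hc _
    obtain rfl : c = [] := List.length_eq_zero_iff.mp (Nat.le_zero.mp hn)
    exact ⟨[], rfl, hc.1⟩
  | succ n ih =>
    intro x y c hn hc hxy
    match c, hc with
    | [], hc => exact ⟨[], rfl, hc.1⟩
    | (v, e) :: t, hc =>
      let P : V × E → Bool := fun q => decide (¬ G.KConn 3 q.1 x)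
      have hsplit : ((v, e) :: t.takeWhile P) ++ t.dropWhile P = (v, e) :: t := by
        simp
      have hc' := hc
      rw [← hsplit] at hc'
      obtain ⟨hch, hnd⟩ := hc'
      obtain ⟨z, h1, h2⟩ := (isChain_append G _ _ _ _).mp hch
      rw [List.map_append] at hnd
      have hnd' := List.nodup_append.mp hnd
      have hxz : G.KConn 3 x z := by
        rcases hd : t.dropWhile P with _ | ⟨⟨a, f⟩, r⟩
        · rw [hd] at h2
          cases h2
          exact hxy
        · rw [hd] at h2
          have h3 : P (a, f) = false := by
            have := List.head_dropWhile_not P (l := t) (by rw [hd]; simp)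
            simpa [hd] using this
          have h4 : G.KConn 3 a x := by simpa [P] using h3
          rw [h2.1] at h4
          exact h4.symm'
      obtain ⟨L, hL, hLs⟩ := ih z y (t.dropWhile P) (by
        have := (List.dropWhile_suffix (l := t) P).length_le
        simp only [List.length_cons] at hn
        omega) ⟨h2, hnd'.2.1⟩ (hxz.symm'.trans' hxy)
      refine ⟨((v, e) :: t.takeWhile P) :: L, ?_, by simp, z, ⟨⟨h1, hnd'.1⟩, hxz, ?_⟩, hLs⟩
      · rw [List.flatten_cons, hL, hsplit]
      · intro u hu
        simp only [List.map_cons, List.tail_cons, List.mem_map] at hu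
        obtain ⟨q, hq, rfl⟩ := hu
        simpa [P] using List.mem_takeWhile_imp hq

lemma shortChain_head (G : Multigraph V E) {x y : V} {L : List (List (V × E))}
    (h : G.ShortChain x y L) : ∀ q ∈ L.flatten.head?, q.1 = x := by
  cases L with
  | nil => simp
  | cons s L =>
    obtain ⟨hs, z, ⟨⟨hc, _⟩, _⟩, _⟩ := h
    rcases s with _ | ⟨⟨v, e⟩, t⟩
    · exact absurd rfl hs
    · intro q hq
      simp at hq
      subst hq
      exact hc.1

lemma split_unique {α : Type*} (P : α → Prop) (t t' r r' : List α) (h : t ++ r = t' ++ r')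
    (ht : ∀ a ∈ t, ¬ P a) (ht' : ∀ a ∈ t', ¬ P a) (hr : ∀ a ∈ r.head?, P a)
    (hr' : ∀ a ∈ r'.head?, P a) : t = t' ∧ r = r' := by
  induction t generalizing t' with
  | nil =>
    cases t' with
    | nil => exact ⟨rfl, h⟩
    | cons a t' =>
      simp only [List.nil_append, List.cons_append] at h
      subst h
      exact absurd (hr a (by simp)) (ht' a (by simp))
  | cons a t ih =>
    cases t' with
    | nil =>
      simp only [List.nil_append, List.cons_append] at h
      subst h
      exact absurd (hr' a (by simp)) (ht a (by simp))
    | cons a' t' =>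
      simp only [List.cons_append, List.cons.injEq] at h
      obtain ⟨rfl, h⟩ := h
      obtain ⟨rfl, rfl⟩ := ih t' h (fun b hb => ht b (by simp [hb])) (fun b hb => ht' b (by simp [hb]))
      exact ⟨rfl, rfl⟩

lemma short_unique (G : Multigraph V E) (L : List (List (V × E))) : ∀ (x y : V)
    (L' : List (List (V × E))), G.ShortChain x y L → G.ShortChain x y L' →
    L.flatten = L'.flatten → L = L' := by
  induction L with
  | nil =>
    intro x y L' _ h' hf
    cases L' with
    | nil => rfl
    | cons s L' =>
      exfalso
      rw [List.flatten_cons] at hf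
      exact h'.1 (List.append_eq_nil_iff.mp hf.symm).1
  | cons s L ih =>
    intro x y L' h h' hf
    cases L' with
    | nil =>
      exfalso
      rw [List.flatten_cons] at hf
      exact h.1 (List.append_eq_nil_iff.mp hf).1
    | cons s' L' =>
      obtain ⟨hs, z, ⟨⟨hc, _⟩, hxz, hin⟩, hL⟩ := h
      obtain ⟨hs', z', ⟨⟨hc', _⟩, hxz', hin'⟩, hL'⟩ := h'
      rcases s with _ | ⟨q, t⟩
      · exact absurd rfl hs
      rcases s' with _ | ⟨q', t'⟩
      · exact absurd rfl hs'
      simp only [List.flatten_cons, List.cons_append, List.cons.injEq] at hf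
      obtain ⟨rfl, hf⟩ := hf
      obtain ⟨rfl, hr⟩ := split_unique (fun a : V × E => G.KConn 3 a.1 x) t t' _ _ hf
        (fun a ha => hin a.1 (by simpa using ⟨a.2, ha⟩))
        (fun a ha => hin' a.1 (by simpa using ⟨a.2, ha⟩))
        (fun a ha => by
          show G.KConn 3 a.1 x
          rw [shortChain_head G hL a ha]; exact hxz.symm')
        (fun a ha => by
          show G.KConn 3 a.1 x
          rw [shortChain_head G hL' a ha]; exact hxz'.symm')
      obtain rfl := isChain_end_unique G _ _ _ _ hc hc'
      rw [ih z y L' hL hL' hr]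

end Aux

variable {V E : Type*} [Fintype V] [Fintype E] [DecidableEq V] [DecidableEq E]


theorem stmt8 (G : Multigraph V E) (x y : V) (c : List (V × E)) (hne : c ≠ [])
    (hc : G.IsTtrail x y c) (hxy : G.KConn 3 x y) :
    ∃! L : List (List (V × E)), L.flatten = c ∧ G.ShortChain x y L := by
  obtain ⟨L, hL, hs⟩ := short_exists G c.length x y c le_rfl hc hxy
  refine ⟨L, ⟨hL, hs⟩, ?_⟩
  rintro L' ⟨hL', hs'⟩
  exact short_unique G L' x y L hs' hs (hL'.trans hL.symm)

end Multigraph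
end
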